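/- Let G be a finite abelian group with |G| > 2, exp(G) = n, and r(G) < n − 1, and let G₀ ⊆ G be a minimal non-half-factorial set with min Δ(G₀) = max Δ*(G). Then there exists g ∈ G with ord(g) = n such that G₀ = {g, −g}. -/

import Mathlib

open Multiset

section Defs

variable {G : Type*} [AddCommGroup G]

/-- `S` is a zero-sum sequence over `G₀`: a multiset with entries in `G₀` and sum `0`. -/
def IsZeroSumSeq (G₀ : Set G) (S : Multiset G) : Prop :=
  (∀ x ∈ S, x ∈ G₀) ∧ S.sum = 0

/-- `S` is an atom over `G₀`: a nonempty zero-sum sequence over `G₀` that is not the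
union of two nonempty zero-sum sequences over `G₀`. -/
def IsAtomSeq (G₀ : Set G) (S : Multiset G) : Prop :=
  IsZeroSumSeq G₀ S ∧ S ≠ 0 ∧
    ∀ A B : Multiset G, IsZeroSumSeq G₀ A → IsZeroSumSeq G₀ B →
      A ≠ 0 → B ≠ 0 → S ≠ A + B

/-- The set of lengths of `B`: all `k` such that `B` is a union of `k` atoms over `G₀`. -/
def LengthSet (G₀ : Set G) (B : Multiset G) : Set ℕ :=
  {k | ∃ l : Multiset (Multiset G), Multiset.card l = k ∧
      (∀ A ∈ l, IsAtomSeq G₀ A) ∧ l.sum = B}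

/-- The set of successive distances of a set of naturals. -/
def DeltaOf (L : Set ℕ) : Set ℕ :=
  {d | ∃ x ∈ L, ∃ y ∈ L, x < y ∧ y - x = d ∧ ∀ z ∈ L, ¬(x < z ∧ z < y)}

/-- The set of distances `Δ(G₀)`. -/
def DeltaSet (G₀ : Set G) : Set ℕ :=
  {d | ∃ B : Multiset G, IsZeroSumSeq G₀ B ∧ B ≠ 0 ∧ d ∈ DeltaOf (LengthSet G₀ B)}

/-- `G₀` is half-factorial if `Δ(G₀) = ∅`. -/
def IsHalfFactorialSet (G₀ : Set G) : Prop := DeltaSet G₀ = ∅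

/-- `G₀` is minimal non-half-factorial if `Δ(G₀) ≠ ∅` and every proper subset is
half-factorial. -/
def IsMinNonHalfFactorial (G₀ : Set G) : Prop :=
  (DeltaSet G₀).Nonempty ∧ ∀ G₁ : Set G, G₁ ⊂ G₀ → DeltaSet G₁ = ∅

/-- The cross number `k(S) = Σ 1/ord(g)` of a multiset over `G`. -/
noncomputable def crossNumber (S : Multiset G) : ℚ :=
  (S.map (fun g => ((addOrderOf g : ℚ))⁻¹)).sum

/-- `G₀` is an LCN-set if every atom over `G₀` has cross number at least 1. -/
def IsLCNSet (G₀ : Set G) : Prop :=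
  ∀ U : Multiset G, IsAtomSeq G₀ U → 1 ≤ crossNumber U

/-- A subset of `G \ {0}` is independent if any integral linear relation on its elements
has all summands zero. -/
def IsIndependentSet (E : Set G) : Prop :=
  (0 : G) ∉ E ∧ ∀ s : Finset G, ↑s ⊆ E → ∀ f : G → ℤ,
    (∑ e ∈ s, f e • e) = 0 → ∀ e ∈ s, f e • e = 0

/-- `d` is a greatest common divisor of the set `S` of naturals. -/
def IsSetGcd (S : Set ℕ) (d : ℕ) : Prop :=
  (∀ s ∈ S, d ∣ s) ∧ ∀ e : ℕ, (∀ s ∈ S, e ∣ s) → e ∣ d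

end Defs

/-- The set of minimal distances `Δ*(G)`. -/
def DeltaStar (G : Type*) [AddCommGroup G] : Set ℕ :=
  {d | ∃ G₀ : Set G, (DeltaSet G₀).Nonempty ∧ d = sInf (DeltaSet G₀)}

/-- The `p`-rank of a finite abelian group: `log_p` of the order of the `p`-torsion
subgroup `{x | p • x = 0}`. -/
noncomputable def pRank (G : Type*) [AddCommGroup G] (p : ℕ) : ℕ :=
  Nat.log p (Nat.card {x : G // p • x = 0})

/-- The rank of a finite abelian group: the maximum of the `p`-ranks over all primes. -/
noncomputable def rankG (G : Type*) [AddCommGroup G] : ℕ :=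
  sSup {r : ℕ | ∃ p : ℕ, p.Prime ∧ r = pRank G p}


/-!
Write `n = exp(G)`, `r = r(G)` and `d = min Δ(G₀)`. For `g` of order `n > 2` all distances of
`{g, -g}` are multiples of `n - 2`, so `n ≤ d + 2`.

If some atom `U` has cross number `k(U) < 1`, then `U^n` is also a product of `n k(U)` atoms of the
form `g^{ord g}`, so that `d + n k(U) ≤ n`. Hence `|U| ≤ n k(U) ≤ 2`, which forces `U = {a, -a}`
with `a` of order `n`, and `G₀ = {a, -a}` by minimality.

Suppose now that all atoms have cross number at least one, and call those with `k(U) > 1` bad.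
By minimality the support of a bad atom is `G₀`. Comparing lengths of `∏_{g ∈ G₀} g^{ord g}` gives
`d + 2 ≤ |G₀|`, so atoms supported on at most `r + 1 < d + 2` elements are not bad. Integral
relations in a group of rank `r` are generated by those involving at most `r + 1` elements, so every
zero-sum sequence `W` satisfies `W + N = P` with `P` and `N` unions of such atoms, and it follows
that `k(U) ≥ d + 1` for every bad atom `U`. A counting argument based on this lower bound removes
the atoms of `N` one at a time: if `Y + A` is a union of atoms of cross number one and `A` is such
an atom with few distinct elements, then `Y` is a union of atoms of cross number one. Thus a bad
atom is itself a union of atoms of cross number one, which is absurd.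
-/

section PRank

variable {H : Type*} [AddCommGroup H] {p : ℕ}

lemma natCard_modN (H : Type*) [AddCommGroup H] [Finite H] (p : ℕ) :
    Nat.card (ModN H p) = Nat.card {x : H // p • x = 0} := by
  let f := LinearMap.lsmul ℤ H p
  have hker : Nat.card f.ker = Nat.card {x : H // p • x = 0} :=
    Nat.card_congr (Equiv.subtypeEquivRight fun x => by simp [f])
  have hquot : Nat.card f.range * Nat.card (H ⧸ f.range) =
      Nat.card f.ker * Nat.card (H ⧸ f.ker) := by
    rw [← Submodule.card_eq_card_quotient_mul_card, ← Submodule.card_eq_card_quotient_mul_card]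
  rw [Nat.card_congr f.quotKerEquivRange.toEquiv, mul_comm] at hquot
  rw [← hker]
  exact Nat.eq_of_mul_eq_mul_right Nat.card_pos hquot

lemma pRank_eq_finrank_modN [Finite H] [Fact p.Prime] :
    pRank H p = Module.finrank (ZMod p) (ModN H p) := by
  have : Finite (ModN H p) := Quotient.finite _
  rw [pRank, ← natCard_modN, Module.natCard_eq_pow_finrank (K := ZMod p), Nat.card_zmod,
    Nat.log_pow (Fact.out : p.Prime).one_lt]

lemma pRank_le_of_injective {K : Type*} [AddCommGroup K] [Finite H] (f : K →+ H)
    (hf : Function.Injective f) (p : ℕ) : pRank K p ≤ pRank H p := by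
  refine Nat.log_mono_right (Nat.card_le_card_of_injective
    (fun x => ⟨f x.1, by rw [← _root_.map_nsmul, x.2, _root_.map_zero]⟩) fun x y hxy => ?_)
  exact Subtype.ext (hf (congrArg Subtype.val hxy))

lemma pRank_le_rankG [Finite H] (hp : p.Prime) : pRank H p ≤ rankG H := by
  refine le_csSup ⟨Nat.card H, ?_⟩ ⟨p, hp, rfl⟩
  rintro r ⟨q, -, rfl⟩
  exact (Nat.log_le_self _ _).trans (Nat.card_le_card_of_injective _ Subtype.val_injective)

lemma not_dvd_natCard_quotient_of_sup_range_lsmul_eq_top [Finite H] [Fact p.Prime]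
    {C : Submodule ℤ H} (hC : LinearMap.range (LinearMap.lsmul ℤ H p) ⊔ C = ⊤) :
    ¬ p ∣ Nat.card (H ⧸ C) := by
  intro hdvd
  have : Finite (H ⧸ C) := Quotient.finite _
  have hsurj : Function.Surjective fun y : H ⧸ C => p • y := by
    intro y
    obtain ⟨x, rfl⟩ := C.mkQ_surjective y
    obtain ⟨_, ⟨w, rfl⟩, c, hc, rfl⟩ := Submodule.mem_sup.1 (hC ▸ Submodule.mem_top (x := x))
    refine ⟨C.mkQ w, ?_⟩
    simp [(Submodule.Quotient.mk_eq_zero C).2 hc]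
  obtain ⟨y, hy⟩ := exists_prime_addOrderOf_dvd_card' p hdvd
  have hy0 : y = 0 := Finite.injective_iff_surjective.2 hsurj
    (by simp only [← hy, addOrderOf_nsmul_eq_zero, smul_zero])
  exact (Fact.out : p.Prime).one_lt.ne (by simpa [hy0] using hy)

lemma exists_finset_not_dvd_natCard_quotient_span [Finite H] [Fact p.Prime] {ι : Type*}
    {v : ι → H} (hv : Submodule.span ℤ (Set.range v) = ⊤) :
    ∃ E : Finset ι, E.card ≤ pRank H p ∧
      ¬ p ∣ Nat.card (H ⧸ Submodule.span ℤ (v '' E)) := by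
  let mk := (LinearMap.range (LinearMap.lsmul ℤ H p)).mkQ
  have : Finite (ModN H p) := Quotient.finite _
  obtain ⟨b, -, -, hspan, hli⟩ := exists_linearIndepOn_extension (K := ZMod p) (v := mk ∘ v)
    (linearIndepOn_empty _ _) (Set.empty_subset Set.univ)
  have : Finite b := hli.linearIndependent.finite
  have := Fintype.ofFinite b
  refine ⟨b.toFinset, ?_, not_dvd_natCard_quotient_of_sup_range_lsmul_eq_top ?_⟩
  · rw [pRank_eq_finrank_modN, Set.toFinset_card]
    exact hli.linearIndependent.fintype_card_le_finrank
  · have hrange : Submodule.span ℤ (Set.range (mk ∘ v)) = ⊤ := by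
      rw [Set.range_comp, ← Submodule.map_span, hv, Submodule.map_top, Submodule.range_mkQ]
    rw [Set.coe_toFinset, ← Submodule.map_mkQ_eq_top, Submodule.map_span, ← Set.image_comp,
      ← Submodule.restrictScalars_span ℤ (ZMod p) ZMod.intCast_surjective, eq_top_iff, ← hrange,
      Submodule.span_le, ← Set.image_univ]
    exact hspan

lemma exists_finset_smul_mem_span [Finite H] (hp : p.Prime) {ι : Type*} (v : ι → H) :
    ∃ E : Finset ι, E.card ≤ rankG H ∧
      ∃ t : ℤ, ¬ (p : ℤ) ∣ t ∧ ∀ i, t • v i ∈ Submodule.span ℤ (v '' E) := by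
  have := Fact.mk hp
  let K := Submodule.span ℤ (Set.range v)
  let w : ι → K := fun i => ⟨v i, Submodule.subset_span (Set.mem_range_self i)⟩
  have hw : Submodule.span ℤ (Set.range w) = ⊤ := by
    refine Submodule.map_injective_of_injective K.injective_subtype ?_
    rw [Submodule.map_span, ← Set.range_comp, Submodule.map_subtype_top]
    rfl
  obtain ⟨E, hE, hdvd⟩ := exists_finset_not_dvd_natCard_quotient_span (p := p) hw
  refine ⟨E, hE.trans ((pRank_le_of_injective K.subtype.toAddMonoidHom K.injective_subtype p).trans
    (pRank_le_rankG hp)), _, Int.natCast_dvd_natCast.not.2 hdvd, fun i => ?_⟩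
  have hmem : (Nat.card (K ⧸ Submodule.span ℤ (w '' E)) : ℤ) • w i ∈
      Submodule.span ℤ (w '' E) := by
    rw [← Submodule.Quotient.mk_eq_zero, Submodule.Quotient.mk_smul, natCast_zsmul]
    exact card_nsmul_eq_zero'
  have himage := Submodule.mem_map_of_mem (f := K.subtype) hmem
  rwa [Submodule.map_span, ← Set.image_comp, _root_.map_smul] at himage

end PRank

section Relations

open Finsupp

lemma mem_of_forall_prime_exists_smul_mem {M : Type*} [AddCommGroup M] {L : Submodule ℤ M}
    {x : M} (h : ∀ p : ℕ, p.Prime → ∃ t : ℤ, ¬ (p : ℤ) ∣ t ∧ t • x ∈ L) : x ∈ L := by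
  by_contra hx
  have horder : addOrderOf (L.mkQ x) ≠ 1 := by
    simpa [AddMonoid.addOrderOf_eq_one_iff] using hx
  obtain ⟨t, hdvd, ht⟩ := h _ (Nat.minFac_prime horder)
  have hzero : t • L.mkQ x = 0 := by
    rwa [← _root_.map_smul, Submodule.mkQ_apply, Submodule.Quotient.mk_eq_zero]
  exact hdvd ((Int.natCast_dvd_natCast.2 (Nat.minFac_dvd _)).trans
    (addOrderOf_dvd_iff_zsmul_eq_zero.2 hzero))

lemma exists_linearMap_linearCombination_eq_smul {H : Type*} [AddCommGroup H] {ι : Type*}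
    {v : ι → H} {E : Finset ι} {t : ℤ} (ht : ∀ i, t • v i ∈ Submodule.span ℤ (v '' E)) :
    ∃ φ : (ι →₀ ℤ) →ₗ[ℤ] (ι →₀ ℤ), (∀ x, (φ x).support ⊆ E) ∧
      ∀ x, linearCombination ℤ v (φ x) = t • linearCombination ℤ v x := by
  simp only [mem_span_image_iff_linearCombination] at ht
  choose a ha hav using ht
  refine ⟨linearCombination ℤ a, fun x => ?_, fun x => ?_⟩
  · exact_mod_cast (mem_supported _ _).1
      (Submodule.sum_mem _ fun i _ => Submodule.smul_mem _ _ (ha i))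
  · induction x using Finsupp.induction_linear with
    | zero => simp
    | add x y hx hy => simp only [_root_.map_add, smul_add, hx, hy]
    | single i c => rw [linearCombination_single, _root_.map_smul, hav, linearCombination_single,
        smul_comm]

lemma smul_sub_map_mem_span_of_support_subset {H : Type*} [AddCommGroup H] {ι : Type*}
    {v : ι → H} {E : Finset ι} {t : ℤ} {φ : (ι →₀ ℤ) →ₗ[ℤ] (ι →₀ ℤ)}
    (hE : ∀ x, (φ x).support ⊆ E)
    (hφ : ∀ x, linearCombination ℤ v (φ x) = t • linearCombination ℤ v x) (x : ι →₀ ℤ) :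
    t • x - φ x ∈
      Submodule.span ℤ {y | linearCombination ℤ v y = 0 ∧ y.support.card ≤ E.card + 1} := by
  classical
  induction x using Finsupp.induction_linear with
  | zero => simp
  | add x y hx hy => simpa [add_sub_add_comm] using Submodule.add_mem _ hx hy
  | single i c =>
    refine Submodule.subset_span ⟨by rw [_root_.map_sub, hφ, _root_.map_smul, sub_self], ?_⟩
    have hsupport : (t • single i c - φ (single i c)).support ⊆ insert i E := by
      refine support_sub.trans (Finset.union_subset ?_ ?_)
      · exact support_smul.trans (support_single_subset.trans (by simp))
      · exact (hE _).trans (Finset.subset_insert _ _)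
    exact (Finset.card_le_card hsupport).trans (Finset.card_insert_le _ _)

theorem ker_linearCombination_eq_span_card_support_le_rankG_add_one {H : Type*} [AddCommGroup H]
    [Finite H] {ι : Type*} (v : ι → H) :
    LinearMap.ker (linearCombination ℤ v) =
      Submodule.span ℤ {x | linearCombination ℤ v x = 0 ∧ x.support.card ≤ rankG H + 1} := by
  refine le_antisymm (fun x hx => ?_) (Submodule.span_le.2 fun x hx => hx.1)
  refine mem_of_forall_prime_exists_smul_mem fun p hp => ?_
  obtain ⟨E, hE, t, hpt, ht⟩ := exists_finset_smul_mem_span hp v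
  obtain ⟨φ, hφE, hφ⟩ := exists_linearMap_linearCombination_eq_smul ht
  let S := {y | linearCombination ℤ v y = 0 ∧ y.support.card ≤ rankG H + 1}
  have hsub : t • x - φ x ∈ Submodule.span ℤ S :=
    Submodule.span_mono (Set.ofPred_subset_ofPred.2 fun y hy =>
      ⟨hy.1, hy.2.trans (Nat.add_le_add_right hE 1)⟩)
      (smul_sub_map_mem_span_of_support_subset hφE hφ x)
  have hφx : φ x ∈ Submodule.span ℤ S := Submodule.subset_span
    ⟨by rw [hφ, LinearMap.mem_ker.1 hx, smul_zero],
      ((Finset.card_le_card (hφE x)).trans hE).trans (Nat.le_succ _)⟩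
  exact ⟨t, hpt, by simpa using Submodule.add_mem _ hsub hφx⟩

end Relations

section ZeroSum

variable {G : Type*} [AddCommGroup G] {G₀ G₁ : Set G} {A B U : Multiset G}

lemma IsZeroSumSeq.zero : IsZeroSumSeq G₀ (0 : Multiset G) := ⟨by simp, sum_zero⟩

lemma IsZeroSumSeq.add (hA : IsZeroSumSeq G₀ A) (hB : IsZeroSumSeq G₀ B) :
    IsZeroSumSeq G₀ (A + B) :=
  ⟨fun x hx => (mem_add.1 hx).elim (hA.1 x) (hB.1 x), by rw [sum_add, hA.2, hB.2, add_zero]⟩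

lemma IsZeroSumSeq.of_add_left (hA : A.sum = 0) (hAB : IsZeroSumSeq G₀ (A + B)) :
    IsZeroSumSeq G₀ B :=
  ⟨fun x hx => hAB.1 x (mem_add.2 (Or.inr hx)), by simpa [hA] using hAB.2⟩

lemma IsZeroSumSeq.sum {l : Multiset (Multiset G)} (hl : ∀ A ∈ l, IsZeroSumSeq G₀ A) :
    IsZeroSumSeq G₀ l.sum := by
  induction l using Multiset.induction with
  | empty => simpa using IsZeroSumSeq.zero
  | cons A l ih => simpa using (hl A (by simp)).add (ih fun B hB => hl B (by simp [hB]))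

lemma IsAtomSeq.eq_of_le (hU : IsAtomSeq G₀ U) (hA : A.sum = 0) (hA0 : A ≠ 0) (hle : A ≤ U) :
    A = U := by
  obtain ⟨B, rfl⟩ := Multiset.le_iff_exists_add.1 hle
  by_contra hne
  exact hU.2.2 A B ⟨fun x hx => hU.1.1 x (mem_of_le hle hx), hA⟩ (hU.1.of_add_left hA) hA0
    (by rintro rfl; simp at hne) rfl

lemma IsAtomSeq.of_forall_mem (hU : IsAtomSeq G₀ U) (h : ∀ x ∈ U, x ∈ G₁) : IsAtomSeq G₁ U := by
  refine ⟨⟨h, hU.1.2⟩, hU.2.1, ?_⟩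
  rintro A B hA - hA0 hB0 rfl
  have hAU := hU.eq_of_le hA.2 hA0 (Multiset.le_add_right A B)
  exact hB0 (by simpa using hAU)

lemma IsZeroSumSeq.exists_factorization (hB : IsZeroSumSeq G₀ B) :
    ∃ l : Multiset (Multiset G), (∀ A ∈ l, IsAtomSeq G₀ A) ∧ l.sum = B := by
  induction B using Multiset.strongInductionOn with
  | ih B ih =>
    by_cases hB0 : B = 0
    · exact ⟨0, by simp, by simp [hB0]⟩
    by_cases hatom : IsAtomSeq G₀ B
    · exact ⟨{B}, by simpa using hatom, by simp⟩
    simp only [IsAtomSeq, hB, ne_eq, hB0, not_false_eq_true, true_and, not_forall,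
      not_not] at hatom
    obtain ⟨A, C, hA, hC, hA0, hC0, rfl⟩ := hatom
    obtain ⟨l, hl, rfl⟩ := ih A (lt_add_of_pos_right A (pos_iff_ne_zero.2 hC0)) hA
    obtain ⟨m, hm, rfl⟩ := ih C (lt_add_of_pos_left C (pos_iff_ne_zero.2 hA0)) hC
    exact ⟨l + m, fun D hD => (mem_add.1 hD).elim (hl D) (hm D), sum_add l m⟩

lemma isAtomSeq_replicate_addOrderOf {g : G} (hg : g ∈ G₀) (hfin : IsOfFinAddOrder g) :
    IsAtomSeq G₀ (replicate (addOrderOf g) g) := by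
  have hpos := hfin.addOrderOf_pos
  refine ⟨⟨fun x hx => eq_of_mem_replicate hx ▸ hg, by simp [addOrderOf_nsmul_eq_zero]⟩,
    fun h => hpos.ne' (by simpa using congrArg card h), fun A B hA _ hA0 hB0 hAB => ?_⟩
  obtain ⟨k, -, rfl⟩ := le_replicate_iff.1 (hAB ▸ Multiset.le_add_right A B)
  have hdvd : addOrderOf g ∣ k := addOrderOf_dvd_of_nsmul_eq_zero (by simpa using hA.2)
  have hk : 0 < k := by simpa using card_pos.2 hA0
  have hcard : addOrderOf g = k + card B := by simpa using congrArg card hAB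
  have := Nat.le_of_dvd hk hdvd
  have := card_pos.2 hB0
  lia

end ZeroSum

section Distances

variable {G : Type*} [AddCommGroup G] {G₀ G₁ : Set G}

lemma exists_mem_deltaSet_add_card_le {l l' : Multiset (Multiset G)}
    (hl : ∀ A ∈ l, IsAtomSeq G₀ A) (hl' : ∀ A ∈ l', IsAtomSeq G₀ A) (hsum : l.sum = l'.sum)
    (hlt : card l < card l') : ∃ d ∈ DeltaSet G₀, d + card l ≤ card l' := by
  classical
  have hex : ∃ k, k ∈ LengthSet G₀ l'.sum ∧ card l < k := ⟨_, ⟨l', rfl, hl', rfl⟩, hlt⟩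
  have hne : l'.sum ≠ 0 := by
    intro h
    obtain ⟨A, hA⟩ := card_pos_iff_exists_mem.1 (Nat.zero_lt_of_lt hlt)
    have hle : A ≤ l'.sum := single_le_sum (fun _ _ => Multiset.zero_le _) A hA
    exact (hl' A hA).2.1 (Multiset.le_zero.1 (h ▸ hle))
  obtain ⟨hmem, hgt⟩ := Nat.find_spec hex
  have hle : Nat.find hex ≤ card l' := Nat.find_min' hex ⟨⟨l', rfl, hl', rfl⟩, hlt⟩
  exact ⟨Nat.find hex - card l, ⟨l'.sum, IsZeroSumSeq.sum fun A hA => (hl' A hA).1, hne, card l,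
    ⟨l, rfl, hl, hsum⟩, Nat.find hex, hmem, hgt, rfl,
    fun k hk hbetween => Nat.find_min hex hbetween.2 ⟨hk, hbetween.1⟩⟩, by lia⟩

lemma sInf_deltaSet_add_card_le {l l' : Multiset (Multiset G)}
    (hl : ∀ A ∈ l, IsAtomSeq G₀ A) (hl' : ∀ A ∈ l', IsAtomSeq G₀ A) (hsum : l.sum = l'.sum)
    (hlt : card l < card l') : sInf (DeltaSet G₀) + card l ≤ card l' := by
  obtain ⟨d, hd, hle⟩ := exists_mem_deltaSet_add_card_le hl hl' hsum hlt
  exact (Nat.add_le_add_right (Nat.sInf_le hd) _).trans hle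

lemma IsHalfFactorialSet.card_eq {l l' : Multiset (Multiset G)} (h : IsHalfFactorialSet G₀)
    (hl : ∀ A ∈ l, IsAtomSeq G₀ A) (hl' : ∀ A ∈ l', IsAtomSeq G₀ A) (hsum : l.sum = l'.sum) :
    card l = card l' := by
  by_contra hne
  rcases lt_or_gt_of_ne hne with hlt | hlt
  · obtain ⟨d, hd, -⟩ := exists_mem_deltaSet_add_card_le hl hl' hsum hlt
    exact Set.eq_empty_iff_forall_notMem.1 h d hd
  · obtain ⟨d, hd, -⟩ := exists_mem_deltaSet_add_card_le hl' hl hsum.symm hlt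
    exact Set.eq_empty_iff_forall_notMem.1 h d hd

lemma exists_card_lt_of_mem_deltaSet {d : ℕ} (hd : d ∈ DeltaSet G₀) :
    ∃ l l' : Multiset (Multiset G), (∀ A ∈ l, IsAtomSeq G₀ A) ∧ (∀ A ∈ l', IsAtomSeq G₀ A) ∧
      l.sum = l'.sum ∧ card l + d = card l' ∧ 0 < d := by
  obtain ⟨_, -, -, _, ⟨l, rfl, hl, rfl⟩, _, ⟨l', rfl, hl', hsum⟩, hlt, rfl, -⟩ := hd
  exact ⟨l, l', hl, hl', hsum.symm, Nat.add_sub_of_le hlt.le, Nat.sub_pos_of_lt hlt⟩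

lemma IsMinNonHalfFactorial.eq_of_subset (hmin : IsMinNonHalfFactorial G₀) (hsub : G₁ ⊆ G₀)
    (hne : (DeltaSet G₁).Nonempty) : G₁ = G₀ := by
  by_contra h
  exact hne.ne_empty (hmin.2 G₁ (hsub.ssubset_of_ne h))

end Distances

section CrossNumber

variable {G : Type*} [AddCommGroup G] {G₀ : Set G} {U : Multiset G}

lemma crossNumber_zero : crossNumber (0 : Multiset G) = 0 := by simp [crossNumber]

lemma crossNumber_add (A B : Multiset G) :
    crossNumber (A + B) = crossNumber A + crossNumber B := by simp [crossNumber]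

lemma crossNumber_nonneg (A : Multiset G) : 0 ≤ crossNumber A := by
  refine Multiset.sum_nonneg fun x hx => ?_
  obtain ⟨g, -, rfl⟩ := mem_map.1 hx
  positivity

lemma crossNumber_mono {A B : Multiset G} (h : A ≤ B) : crossNumber A ≤ crossNumber B := by
  obtain ⟨C, rfl⟩ := Multiset.le_iff_exists_add.1 h
  simpa [crossNumber_add] using crossNumber_nonneg C

lemma crossNumber_sum (l : Multiset (Multiset G)) :
    crossNumber l.sum = (l.map crossNumber).sum :=
  map_multiset_sum (⟨⟨crossNumber, crossNumber_zero⟩, crossNumber_add⟩ : Multiset G →+ ℚ) l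

lemma crossNumber_sum_eq_card {l : Multiset (Multiset G)} (h : ∀ A ∈ l, crossNumber A = 1) :
    crossNumber l.sum = card l := by
  rw [crossNumber_sum, map_congr rfl h, map_const', sum_replicate, nsmul_one]

lemma card_le_crossNumber_sum {l : Multiset (Multiset G)} (h : ∀ A ∈ l, 1 ≤ crossNumber A) :
    (card l : ℚ) ≤ crossNumber l.sum := by
  have hbound : ∀ q ∈ l.map crossNumber, 1 ≤ q := by simpa using h
  simpa [crossNumber_sum] using card_nsmul_le_sum hbound

lemma crossNumber_replicate_addOrderOf {g : G} (hg : IsOfFinAddOrder g) :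
    crossNumber (replicate (addOrderOf g) g) = 1 := by
  have : (addOrderOf g : ℚ) ≠ 0 := Nat.cast_ne_zero.2 hg.addOrderOf_pos.ne'
  simp [crossNumber, this]

lemma IsAtomSeq.count_lt_addOrderOf [DecidableEq G] (hU : IsAtomSeq G₀ U)
    (hk : crossNumber U ≠ 1) {g : G} (hg : IsOfFinAddOrder g) : count g U < addOrderOf g := by
  by_contra! hle
  refine hk ?_
  rw [← hU.eq_of_le (by simp [addOrderOf_nsmul_eq_zero]) ?_ (le_count_iff_replicate_le.1 hle),
    crossNumber_replicate_addOrderOf hg]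
  exact fun h => hg.addOrderOf_pos.ne' (by simpa using congrArg card h)

-- `U^n` is the product over `g ∈ U` of `n / ord g` copies of the atom `g^{ord g}`.
lemma exists_factorization_nsmul_card_eq {n : ℕ} (hn : n ≠ 0) (hU : ∀ g ∈ U, g ∈ G₀)
    (hord : ∀ g ∈ U, n • g = 0) :
    ∃ l : Multiset (Multiset G), (∀ A ∈ l, IsAtomSeq G₀ A) ∧ l.sum = n • U ∧
      (card l : ℚ) = n * crossNumber U := by
  have hfin (g) (hg : g ∈ U) : IsOfFinAddOrder g :=
    isOfFinAddOrder_iff_nsmul_eq_zero.2 ⟨n, Nat.pos_of_ne_zero hn, hord g hg⟩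
  have hdvd (g) (hg : g ∈ U) : addOrderOf g ∣ n := addOrderOf_dvd_of_nsmul_eq_zero (hord g hg)
  refine ⟨U.bind fun g => replicate (n / addOrderOf g) (replicate (addOrderOf g) g),
    fun A hA => ?_, ?_, ?_⟩
  · obtain ⟨g, hg, hA⟩ := mem_bind.1 hA
    exact eq_of_mem_replicate hA ▸ isAtomSeq_replicate_addOrderOf (hU g hg) (hfin g hg)
  · have hterm : ∀ g ∈ U, (replicate (n / addOrderOf g) (replicate (addOrderOf g) g)).sum =
        n • {g} := fun g hg => by
      rw [sum_replicate, nsmul_replicate, nsmul_singleton, Nat.div_mul_cancel (hdvd g hg)]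
    rw [sum_bind, map_congr rfl hterm, sum_map_nsmul, sum_map_singleton]
  · have hterm : ∀ g ∈ U, ((n / addOrderOf g : ℕ) : ℚ) = n * (addOrderOf g : ℚ)⁻¹ :=
      fun g hg => by
        rw [Nat.cast_div (hdvd g hg) (Nat.cast_ne_zero.2 (hfin g hg).addOrderOf_pos.ne'),
          div_eq_mul_inv]
    simp only [card_bind, Function.comp_def, card_replicate, Nat.cast_multiset_sum, map_map]
    rw [map_congr rfl hterm, sum_map_mul_left, crossNumber]

theorem isHalfFactorialSet_iff_forall_crossNumber_eq_one [Finite G] :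
    IsHalfFactorialSet G₀ ↔ ∀ U, IsAtomSeq G₀ U → crossNumber U = 1 := by
  refine ⟨fun h U hU => ?_, fun h => Set.eq_empty_of_forall_notMem fun d hd => ?_⟩
  · have hn : AddMonoid.exponent G ≠ 0 := AddMonoid.exponent_ne_zero_of_finite
    obtain ⟨l, hl, hsum, hcard⟩ := exists_factorization_nsmul_card_eq hn hU.1.1
      fun g _ => AddMonoid.exponent_nsmul_eq_zero g
    have hlength := h.card_eq (l' := replicate (AddMonoid.exponent G) U) hl
      (fun A hA => eq_of_mem_replicate hA ▸ hU) (by rw [hsum, sum_replicate])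
    rw [hlength, card_replicate] at hcard
    exact (mul_eq_left₀ (Nat.cast_ne_zero.2 hn)).1 hcard.symm
  · obtain ⟨l, l', hl, hl', hsum, hcard, hpos⟩ := exists_card_lt_of_mem_deltaSet hd
    have heq : (card l : ℚ) = card l' := by
      rw [← crossNumber_sum_eq_card fun A hA => h A (hl A hA), hsum,
        crossNumber_sum_eq_card fun A hA => h A (hl' A hA)]
    have : card l = card l' := by exact_mod_cast heq
    lia

lemma IsMinNonHalfFactorial.exists_isAtomSeq_crossNumber_ne_one [Finite G]
    (hmin : IsMinNonHalfFactorial G₀) : ∃ U, IsAtomSeq G₀ U ∧ crossNumber U ≠ 1 := by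
  have h := isHalfFactorialSet_iff_forall_crossNumber_eq_one.not.1 hmin.1.ne_empty
  push Not at h
  exact h

lemma IsMinNonHalfFactorial.mem_iff_of_crossNumber_ne_one [Finite G]
    (hmin : IsMinNonHalfFactorial G₀) (hU : IsAtomSeq G₀ U) (hk : crossNumber U ≠ 1) {g : G} :
    g ∈ U ↔ g ∈ G₀ := by
  have hne : (DeltaSet {x | x ∈ U}).Nonempty := Set.nonempty_iff_ne_empty.2 fun h =>
    hk (isHalfFactorialSet_iff_forall_crossNumber_eq_one.1 h U (hU.of_forall_mem fun _ hx => hx))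
  exact Set.ext_iff.1 (hmin.eq_of_subset (G₁ := {x | x ∈ U}) hU.1.1 hne) g

end CrossNumber

section Pair

variable {G : Type*} [AddCommGroup G] {g : G}

lemma isAtomSeq_pair_neg (hg : g ≠ 0) : IsAtomSeq {g, -g} {g, -g} := by
  refine ⟨⟨by simp, by simp⟩, by simp, fun A B hA _ hA0 hB0 hAB => ?_⟩
  have hcard : 2 = card A + card B := by simpa using congrArg card hAB
  have := card_pos.2 hA0
  have := card_pos.2 hB0
  obtain ⟨a, rfl⟩ := card_eq_one.1 (show card A = 1 by lia)
  have ha : a = 0 := by simpa using hA.2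
  simpa [ha, hg, eq_comm] using hA.1 a

lemma IsAtomSeq.eq_replicate_addOrderOf_of_forall_mem_eq {G₀ : Set G} {A : Multiset G}
    (hA : IsAtomSeq G₀ A) (h : ∀ x ∈ A, x = g) : A = replicate (addOrderOf g) g := by
  have hrep := eq_replicate_card.2 h
  have hcard : 0 < card A := card_pos.2 hA.2.1
  have hzero : card A • g = 0 := by
    rw [← sum_replicate, ← hrep, hA.1.2]
  have hfin : IsOfFinAddOrder g := isOfFinAddOrder_iff_nsmul_eq_zero.2 ⟨_, hcard, hzero⟩
  refine (hA.eq_of_le (by simp [addOrderOf_nsmul_eq_zero]) ?_ ?_).symm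
  · exact fun h => hfin.addOrderOf_pos.ne' (by simpa using congrArg card h)
  · rw [hrep]
    exact (replicate_le_replicate g).2
      (Nat.le_of_dvd hcard (addOrderOf_dvd_of_nsmul_eq_zero hzero))

lemma IsAtomSeq.eq_of_pair_neg {A : Multiset G} (hA : IsAtomSeq {g, -g} A) (hne : g ≠ -g) :
    A = {g, -g} ∨ A = replicate (addOrderOf g) g ∨ A = replicate (addOrderOf g) (-g) := by
  by_cases hg : g ∈ A
  · by_cases hneg : -g ∈ A
    · have hle : ({g, -g} : Multiset G) ≤ A := (le_iff_subset (by simpa using hne)).2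
        (by simp [Multiset.subset_iff, hg, hneg])
      exact Or.inl (hA.eq_of_le (by simp) (by simp) hle).symm
    · refine Or.inr (Or.inl (hA.eq_replicate_addOrderOf_of_forall_mem_eq fun x hx => ?_))
      exact (hA.1.1 x hx).resolve_right (by rintro rfl; exact hneg hx)
  · refine Or.inr (Or.inr (addOrderOf_neg g ▸
      hA.eq_replicate_addOrderOf_of_forall_mem_eq fun x hx => ?_))
    exact (hA.1.1 x hx).resolve_left (by rintro rfl; exact hg hx)

lemma ne_neg_of_two_lt_addOrderOf (hg : 2 < addOrderOf g) : g ≠ -g := fun h =>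
  hg.not_ge (addOrderOf_le_of_nsmul_eq_zero two_pos
    (by rw [two_nsmul, ← eq_neg_iff_add_eq_zero, ← h]))

-- With `n = m + 2`, the additive weight `v_g + (n - 1) v_{-g}` takes the values `n`, `n` and
-- `n (n - 1)` on the three atoms `{g, -g}`, `g^n` and `(-g)^n`.
lemma weight_sum_modEq_of_pair_neg [DecidableEq G] {m : ℕ} (hm : 0 < m)
    (hg : addOrderOf g = m + 2) {l : Multiset (Multiset G)}
    (hl : ∀ A ∈ l, IsAtomSeq {g, -g} A) :
    count g l.sum + (m + 1) * count (-g) l.sum ≡ (m + 2) * card l [MOD (m + 2) * m] := by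
  have hne : g ≠ -g := ne_neg_of_two_lt_addOrderOf (by lia)
  have hatom (A) (hA : IsAtomSeq {g, -g} A) :
      count g A + (m + 1) * count (-g) A ≡ m + 2 [MOD (m + 2) * m] := by
    rcases hA.eq_of_pair_neg hne with rfl | rfl | rfl
    · simp [hne, hne.symm, Nat.ModEq, show 1 + (m + 1) = m + 2 by ring]
    · rw [count_replicate_self, count_replicate, if_neg hne, hg, mul_zero, add_zero]
    · rw [count_replicate_self, count_replicate, if_neg hne.symm, hg, zero_add,
        show (m + 1) * (m + 2) = m + 2 + (m + 2) * m by ring]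
      exact Nat.add_modEq_right
  induction l using Multiset.induction with
  | empty => simp [Nat.ModEq.refl]
  | cons A l ih =>
    have hadd := (hatom A (hl A (by simp))).add (ih fun B hB => hl B (by simp [hB]))
    convert hadd using 1
    · rw [sum_cons, count_add, count_add]
      ring
    · rw [card_cons]
      ring

lemma card_modEq_card_of_pair_neg {m : ℕ} (hm : 0 < m) (hg : addOrderOf g = m + 2)
    {l l' : Multiset (Multiset G)} (hl : ∀ A ∈ l, IsAtomSeq {g, -g} A)
    (hl' : ∀ A ∈ l', IsAtomSeq {g, -g} A) (hsum : l.sum = l'.sum) :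
    card l ≡ card l' [MOD m] := by
  classical
  exact Nat.ModEq.mul_left_cancel' (by lia) ((weight_sum_modEq_of_pair_neg hm hg hl).symm.trans
    (hsum ▸ weight_sum_modEq_of_pair_neg hm hg hl'))

lemma deltaSet_pair_neg_nonempty (hg : 2 < addOrderOf g) :
    (DeltaSet ({g, -g} : Set G)).Nonempty := by
  have hfin : IsOfFinAddOrder g := addOrderOf_pos_iff.1 (Nat.zero_lt_of_lt hg)
  have hg0 : g ≠ 0 := fun h => by simp [h] at hg
  have hpos : IsAtomSeq {g, -g} (replicate (addOrderOf g) g) :=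
    isAtomSeq_replicate_addOrderOf (by simp) hfin
  have hneg : IsAtomSeq {g, -g} (replicate (addOrderOf g) (-g)) :=
    addOrderOf_neg g ▸ isAtomSeq_replicate_addOrderOf (by simp) hfin.neg
  obtain ⟨d, hd, -⟩ := exists_mem_deltaSet_add_card_le (G₀ := {g, -g})
    (l := {replicate (addOrderOf g) g, replicate (addOrderOf g) (-g)})
    (l' := replicate (addOrderOf g) {g, -g}) (by simp [hpos, hneg])
    (fun A hA => eq_of_mem_replicate hA ▸ isAtomSeq_pair_neg hg0)
    (by simp [insert_eq_cons, ← singleton_add, nsmul_singleton]) (by simpa using hg)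
  exact ⟨d, hd⟩

theorem addOrderOf_le_sInf_deltaSet_pair_neg_add_two (hg : 2 < addOrderOf g) :
    addOrderOf g ≤ sInf (DeltaSet ({g, -g} : Set G)) + 2 := by
  obtain ⟨l, l', hl, hl', hsum, hcard, hpos⟩ :=
    exists_card_lt_of_mem_deltaSet (Nat.sInf_mem (deltaSet_pair_neg_nonempty hg))
  obtain ⟨m, hm⟩ := Nat.exists_eq_add_of_le' hg.le
  have hdvd : m ∣ card l' - card l := (Nat.modEq_iff_dvd' (by lia)).1
    (card_modEq_card_of_pair_neg (by lia) hm hl hl' hsum)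
  have := Nat.le_of_dvd (by lia) hdvd
  lia

lemma bddAbove_deltaStar [Finite G] : BddAbove (DeltaStar G) := by
  refine ((Set.finite_range fun G₀ : Set G => sInf (DeltaSet G₀)).subset ?_).bddAbove
  rintro d ⟨G₀, -, rfl⟩
  exact Set.mem_range_self G₀

theorem exponent_le_sSup_deltaStar_add_two [Finite G] :
    AddMonoid.exponent G ≤ sSup (DeltaStar G) + 2 := by
  obtain ⟨g, hg⟩ := AddMonoid.exists_addOrderOf_eq_exponent
    (AddMonoid.ExponentExists.of_finite (G := G))
  rcases le_or_gt (addOrderOf g) 2 with hle | hlt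
  · lia
  · calc AddMonoid.exponent G ≤ sInf (DeltaSet {g, -g}) + 2 :=
        hg ▸ addOrderOf_le_sInf_deltaSet_pair_neg_add_two hlt
      _ ≤ sSup (DeltaStar G) + 2 := Nat.add_le_add_right
        (le_csSup bddAbove_deltaStar ⟨_, deltaSet_pair_neg_nonempty hlt, rfl⟩) 2

end Pair

section NonLCN

variable {G : Type*} [AddCommGroup G] {G₀ : Set G} {U : Multiset G}

lemma IsAtomSeq.one_lt_card (hU : IsAtomSeq G₀ U) (hk : crossNumber U < 1) : 1 < card U := by
  by_contra! hle
  obtain ⟨g, rfl⟩ := card_eq_one.1 (le_antisymm hle (card_pos.2 hU.2.1))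
  have hg : g = 0 := by simpa using hU.1.2
  simp [crossNumber, hg] at hk

variable [Finite G]

lemma card_le_exponent_mul_crossNumber (U : Multiset G) :
    (card U : ℚ) ≤ AddMonoid.exponent G * crossNumber U := by
  have hterm : ∀ q ∈ U.map fun g => (AddMonoid.exponent G : ℚ) * (addOrderOf g : ℚ)⁻¹, 1 ≤ q := by
    intro q hq
    obtain ⟨g, -, rfl⟩ := mem_map.1 hq
    rw [← div_eq_mul_inv, one_le_div (Nat.cast_pos.2 (addOrderOf_pos g)), Nat.cast_le]
    exact AddMonoid.addOrderOf_le_exponent AddMonoid.ExponentExists.of_finite g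
  simpa [crossNumber, sum_map_mul_left] using card_nsmul_le_sum hterm

lemma IsAtomSeq.two_lt_exponent (hU : IsAtomSeq G₀ U) (hk : crossNumber U < 1) :
    2 < AddMonoid.exponent G := by
  have hpos : (0 : ℚ) < AddMonoid.exponent G :=
    Nat.cast_pos.2 (Nat.pos_of_ne_zero AddMonoid.exponent_ne_zero_of_finite)
  have hlt : (card U : ℚ) < AddMonoid.exponent G :=
    (card_le_exponent_mul_crossNumber U).trans_lt (mul_lt_of_lt_one_right hpos hk)
  exact lt_of_le_of_lt (hU.one_lt_card hk) (by exact_mod_cast hlt)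

lemma IsAtomSeq.sInf_deltaSet_add_exponent_mul_crossNumber_le (hU : IsAtomSeq G₀ U)
    (hk : crossNumber U < 1) :
    sInf (DeltaSet G₀) + AddMonoid.exponent G * crossNumber U ≤ AddMonoid.exponent G := by
  have hn : AddMonoid.exponent G ≠ 0 := AddMonoid.exponent_ne_zero_of_finite
  obtain ⟨l, hl, hsum, hcard⟩ := exists_factorization_nsmul_card_eq hn hU.1.1
    fun g _ => AddMonoid.exponent_nsmul_eq_zero g
  have hlt : (card l : ℚ) < AddMonoid.exponent G :=
    hcard ▸ mul_lt_of_lt_one_right (by positivity) hk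
  have hle := sInf_deltaSet_add_card_le (l' := replicate (AddMonoid.exponent G) U) hl
    (fun A hA => eq_of_mem_replicate hA ▸ hU) (by rw [hsum, sum_replicate])
    (by rw [card_replicate]; exact_mod_cast hlt)
  rw [card_replicate] at hle
  rw [← hcard]
  exact_mod_cast hle

lemma IsAtomSeq.exists_eq_pair_neg_of_crossNumber_lt_one (hU : IsAtomSeq G₀ U)
    (hk : crossNumber U < 1) (hd : AddMonoid.exponent G ≤ sInf (DeltaSet G₀) + 2) :
    ∃ g : G, addOrderOf g = AddMonoid.exponent G ∧ U = {g, -g} := by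
  have hupper : (AddMonoid.exponent G : ℚ) * crossNumber U ≤ 2 := by
    have := hU.sInf_deltaSet_add_exponent_mul_crossNumber_le hk
    have : (AddMonoid.exponent G : ℚ) ≤ sInf (DeltaSet G₀) + 2 := by exact_mod_cast hd
    linarith
  have hlower := card_le_exponent_mul_crossNumber U
  have hcard : card U = 2 :=
    le_antisymm (by exact_mod_cast hlower.trans hupper) (hU.one_lt_card hk)
  obtain ⟨a, b, rfl⟩ := card_eq_two.1 hcard
  obtain rfl : -a = b := neg_eq_of_add_eq_zero_right (by simpa using hU.1.2)
  refine ⟨a, ?_, rfl⟩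
  have hprod : (AddMonoid.exponent G : ℚ) * crossNumber {a, -a} = 2 :=
    le_antisymm hupper (by simpa using hlower)
  have hpos : (addOrderOf a : ℚ) ≠ 0 := Nat.cast_ne_zero.2 (addOrderOf_pos a).ne'
  have hratio : (AddMonoid.exponent G : ℚ) = addOrderOf a := by
    simp only [crossNumber, insert_eq_cons, map_cons, map_singleton, sum_cons, sum_singleton,
      addOrderOf_neg] at hprod
    field_simp at hprod
    linarith
  exact_mod_cast hratio.symm

theorem IsMinNonHalfFactorial.exists_eq_pair_neg_of_not_isLCNSet
    (hmin : IsMinNonHalfFactorial G₀) (hlcn : ¬ IsLCNSet G₀)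
    (hd : AddMonoid.exponent G ≤ sInf (DeltaSet G₀) + 2) :
    ∃ g : G, addOrderOf g = AddMonoid.exponent G ∧ G₀ = {g, -g} := by
  simp only [IsLCNSet, not_forall, not_le] at hlcn
  obtain ⟨U, hU, hk⟩ := hlcn
  have hn : 2 < AddMonoid.exponent G := hU.two_lt_exponent hk
  obtain ⟨g, hg, rfl⟩ := hU.exists_eq_pair_neg_of_crossNumber_lt_one hk hd
  refine ⟨g, hg, (hmin.eq_of_subset ?_ (deltaSet_pair_neg_nonempty (hg ▸ hn))).symm⟩
  exact fun x hx => hU.1.1 x (by simpa using hx)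

end NonLCN

section Multiplicity

open Finsupp (linearCombination single)

variable {ι : Type*} [DecidableEq ι]

/-- The multiplicities of the elements of a multiset as integer coefficients, i.e. the embedding
of the free abelian monoid on `ι` into the free abelian group on `ι`. -/
noncomputable def intMultiplicity : Multiset ι →+ (ι →₀ ℤ) :=
  (Finsupp.mapRange.addMonoidHom (Nat.castAddMonoidHom ℤ)).comp Multiset.toFinsupp.toAddMonoidHom

lemma intMultiplicity_apply (M : Multiset ι) (i : ι) : intMultiplicity M i = count i M := by
  simp [intMultiplicity]

lemma intMultiplicity_injective : Function.Injective (intMultiplicity (ι := ι)) := by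
  refine fun M N h => Multiset.ext.2 fun i => ?_
  simpa [intMultiplicity_apply] using DFunLike.congr_fun h i

lemma intMultiplicity_singleton (i : ι) : intMultiplicity {i} = single i 1 := by
  ext j
  simp [intMultiplicity_apply, count_singleton, Finsupp.single_apply, eq_comm]

lemma linearCombination_intMultiplicity {H : Type*} [AddCommGroup H] (v : ι → H)
    (M : Multiset ι) : linearCombination ℤ v (intMultiplicity M) = (M.map v).sum := by
  induction M using Multiset.induction with
  | empty => simp
  | cons i M ih => rw [← singleton_add, _root_.map_add, _root_.map_add, ih,
      intMultiplicity_singleton, Finsupp.linearCombination_single, one_smul, Multiset.map_add,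
      sum_add, map_singleton, sum_singleton]

lemma exists_intMultiplicity_sub_eq (x : ι →₀ ℤ) :
    ∃ P N : Multiset ι, P.toFinset ⊆ x.support ∧ N.toFinset ⊆ x.support ∧
      intMultiplicity P - intMultiplicity N = x := by
  have hsupport (M : Multiset ι) (hM : ∀ i, x i = 0 → count i M = 0) : M.toFinset ⊆ x.support :=
    fun i hi => Finsupp.mem_support_iff.2 fun h0 => count_ne_zero.2 (mem_toFinset.1 hi) (hM i h0)
  refine ⟨toFinsupp.symm (x.mapRange Int.toNat rfl),
    toFinsupp.symm ((-x).mapRange Int.toNat rfl), hsupport _ fun i hi => ?_,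
    hsupport _ fun i hi => ?_, Finsupp.ext fun i => ?_⟩
  all_goals simp [intMultiplicity_apply, *]

-- If `n` kills `H`, then `P - N = (P + (n - 1) N) - n N`, and `n N` has sum zero.
lemma exists_intMultiplicity_sub_eq_of_linearCombination_eq_zero {H : Type*} [AddCommGroup H]
    [Finite H] {v : ι → H} {x : ι →₀ ℤ} (hx : linearCombination ℤ v x = 0) :
    ∃ P N : Multiset ι, (P.map v).sum = 0 ∧ (N.map v).sum = 0 ∧ P.toFinset ⊆ x.support ∧
      N.toFinset ⊆ x.support ∧ intMultiplicity P - intMultiplicity N = x := by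
  obtain ⟨P, N, hP, hN, rfl⟩ := exists_intMultiplicity_sub_eq x
  have hn : Nat.card H - 1 + 1 = Nat.card H := Nat.sub_add_cancel Nat.card_pos
  have hsum : (P.map v).sum = (N.map v).sum := by
    simpa [linearCombination_intMultiplicity, sub_eq_zero] using hx
  have hNsupport (k : ℕ) : (k • N).toFinset ⊆
      (intMultiplicity P - intMultiplicity N).support := fun i hi =>
    hN (mem_toFinset.2 (mem_of_mem_nsmul (mem_toFinset.1 hi)))
  refine ⟨P + (Nat.card H - 1) • N, Nat.card H • N, ?_, ?_, ?_, ?_, ?_⟩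
  · rw [Multiset.map_add, sum_add, map_nsmul, sum_nsmul, hsum, add_comm, ← succ_nsmul, hn,
      card_nsmul_eq_zero']
  · rw [map_nsmul, sum_nsmul, card_nsmul_eq_zero']
  · rw [toFinset_add]
    exact Finset.union_subset hP (hNsupport _)
  · exact hNsupport _
  · rw [_root_.map_add, _root_.map_nsmul, _root_.map_nsmul, ← hn, succ_nsmul, Nat.add_sub_cancel]
    abel

theorem exists_add_eq_of_sum_map_eq_zero {H : Type*} [AddCommGroup H] [Finite H] (v : ι → H)
    {W : Multiset ι} (hW : (W.map v).sum = 0) :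
    let T := AddSubmonoid.closure
      {M : Multiset ι | (M.map v).sum = 0 ∧ M.toFinset.card ≤ rankG H + 1}
    ∃ P ∈ T, ∃ N ∈ T, W + N = P := by
  intro T
  suffices h : ∀ x ∈ LinearMap.ker (linearCombination ℤ v),
      ∃ P ∈ T, ∃ N ∈ T, intMultiplicity P - intMultiplicity N = x by
    obtain ⟨P, hP, N, hN, hPN⟩ := h (intMultiplicity W) (by
      rw [LinearMap.mem_ker, linearCombination_intMultiplicity, hW])
    exact ⟨P, hP, N, hN, intMultiplicity_injective
      (by rw [_root_.map_add, ← hPN, sub_add_cancel])⟩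
  intro x hx
  rw [ker_linearCombination_eq_span_card_support_le_rankG_add_one,
    ← Submodule.mem_toAddSubgroup, Submodule.span_int_eq_addSubgroupClosure] at hx
  induction hx using AddSubgroup.closure_induction with
  | mem x hx =>
    obtain ⟨P, N, hP, hN, hPx, hNx, hPN⟩ :=
      exists_intMultiplicity_sub_eq_of_linearCombination_eq_zero hx.1
    exact ⟨P, AddSubmonoid.subset_closure ⟨hP, (Finset.card_le_card hPx).trans hx.2⟩,
      N, AddSubmonoid.subset_closure ⟨hN, (Finset.card_le_card hNx).trans hx.2⟩, hPN⟩
  | zero => exact ⟨0, T.zero_mem, 0, T.zero_mem, sub_self _⟩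
  | add x y _ _ hx hy =>
    obtain ⟨P, hP, N, hN, rfl⟩ := hx
    obtain ⟨P', hP', N', hN', rfl⟩ := hy
    exact ⟨P + P', T.add_mem hP hP', N + N', T.add_mem hN hN', by
      rw [_root_.map_add, _root_.map_add, add_sub_add_comm]⟩
  | neg x _ hx =>
    obtain ⟨P, hP, N, hN, rfl⟩ := hx
    exact ⟨N, hN, P, hP, (neg_sub _ _).symm⟩

end Multiplicity

section SmallSupport

variable {G : Type*} [AddCommGroup G] {G₀ : Set G} [DecidableEq G]

lemma IsZeroSumSeq.mem_closure_isAtomSeq_card_toFinset_le {M : Multiset G} {k : ℕ}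
    (hM : IsZeroSumSeq G₀ M) (hcard : M.toFinset.card ≤ k) :
    M ∈ AddSubmonoid.closure {A | IsAtomSeq G₀ A ∧ A.toFinset.card ≤ k} := by
  obtain ⟨l, hl, rfl⟩ := hM.exists_factorization
  refine AddSubmonoid.multiset_sum_mem _ l fun A hA => AddSubmonoid.subset_closure
    ⟨hl A hA, le_trans (Finset.card_le_card ?_) hcard⟩
  exact toFinset_subset.2 (subset_of_le (single_le_sum (fun _ _ => Multiset.zero_le _) A hA))

theorem IsZeroSumSeq.exists_add_eq [Finite G] {W : Multiset G} (hW : IsZeroSumSeq G₀ W) :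
    let T := AddSubmonoid.closure {A | IsAtomSeq G₀ A ∧ A.toFinset.card ≤ rankG G + 1}
    ∃ P ∈ T, ∃ N ∈ T, W + N = P := by
  intro T
  have hmap : AddSubmonoid.closure {M : Multiset G₀ | (M.map Subtype.val).sum = 0 ∧
      M.toFinset.card ≤ rankG G + 1} ≤ T.comap (mapAddMonoidHom Subtype.val) := by
    refine AddSubmonoid.closure_le.2 fun M hM => ?_
    have hzero : IsZeroSumSeq G₀ (M.map Subtype.val) :=
      ⟨fun x hx => by obtain ⟨y, -, rfl⟩ := mem_map.1 hx; exact y.2, hM.1⟩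
    refine hzero.mem_closure_isAtomSeq_card_toFinset_le ?_
    rw [toFinset_map]
    exact Finset.card_image_le.trans hM.2
  lift W to Multiset G₀ using hW.1
  obtain ⟨P, hP, N, hN, rfl⟩ := exists_add_eq_of_sum_map_eq_zero Subtype.val hW.2
  exact ⟨_, hmap hP, _, hmap hN, (Multiset.map_add _ W N).symm⟩

end SmallSupport

section Removal

variable {α : Type*} [DecidableEq α]

lemma succ_mul_countP_lt_count_le (a : α) (y : ℕ) (l : Multiset (Multiset α)) :
    (y + 1) * countP (fun V => y < count a V) l ≤ count a l.sum := by
  induction l using Multiset.induction with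
  | empty => simp
  | cons V l ih =>
    rw [countP_cons, sum_cons, count_add]
    split_ifs <;> lia

lemma card_le_sum_countP {β γ : Type*} (T : Finset γ) (P : γ → β → Prop)
    [∀ c, DecidablePred (P c)] {l : Multiset β} (h : ∀ b ∈ l, ∃ c ∈ T, P c b) :
    card l ≤ ∑ c ∈ T, countP (P c) l := by
  induction l using Multiset.induction with
  | empty => simp
  | cons b l ih =>
    obtain ⟨c, hc, hP⟩ := h b (mem_cons_self b l)
    have hone : 1 ≤ ∑ c ∈ T, if P c b then 1 else 0 :=
      (if_pos hP).ge.trans (Finset.single_le_sum (f := fun c => if P c b then 1 else 0)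
        (fun _ _ => Nat.zero_le _) hc)
    simp only [countP_cons, Finset.sum_add_distrib, card_cons]
    exact Nat.add_le_add (ih fun b hb => h b (mem_cons_of_mem hb)) hone

-- Each `V ∈ l` contains some `a ∈ A` more than `y = count a Y ≥ 1` times. For a fixed `a`, at most
-- `(y + count a A) / (y + 1) ≤ (count a A + 1) / 2` of the `V ∈ l` can do so.
lemma two_mul_card_le_of_sum_eq_add {l : Multiset (Multiset α)} {Y A : Multiset α}
    (hsum : l.sum = Y + A) (hA : A ⊆ Y) (hl : ∀ V ∈ l, ¬ V ≤ Y) :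
    2 * card l ≤ card A + A.toFinset.card := by
  have hcover : card l ≤ ∑ a ∈ A.toFinset, countP (fun V => count a Y < count a V) l := by
    refine card_le_sum_countP _ (fun a V => count a Y < count a V) fun V hV => ?_
    obtain ⟨a, ha⟩ : ∃ a, count a Y < count a V := by simpa [le_iff_count] using hl V hV
    have hle : count a V ≤ count a Y + count a A := by
      rw [← count_add, ← hsum]
      exact count_le_of_le a (single_le_sum (fun _ _ => Multiset.zero_le _) V hV)
    exact ⟨a, mem_toFinset.2 (count_pos.1 (by lia)), ha⟩
  have hslot : ∀ a ∈ A.toFinset,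
      2 * countP (fun V => count a Y < count a V) l ≤ count a A + 1 := by
    intro a ha
    have hle := succ_mul_countP_lt_count_le a (count a Y) l
    have hY : 0 < count a Y := count_pos.2 (hA (mem_toFinset.1 ha))
    rw [hsum, count_add] at hle
    generalize countP (fun V => count a Y < count a V) l = c at hle ⊢
    nlinarith
  calc 2 * card l ≤ ∑ a ∈ A.toFinset, 2 * countP (fun V => count a Y < count a V) l := by
        rw [← Finset.mul_sum]
        exact Nat.mul_le_mul_left 2 hcover
    _ ≤ ∑ a ∈ A.toFinset, (count a A + 1) := Finset.sum_le_sum hslot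
    _ = card A + A.toFinset.card := by
        rw [Finset.sum_add_distrib, toFinset_sum_count_eq, Finset.card_eq_sum_ones]

variable {G : Type*} [AddCommGroup G] {G₀ : Set G} {A B Y : Multiset G} {m : ℕ}

/-- The atoms over `G₀` of cross number one. By
`isHalfFactorialSet_iff_forall_crossNumber_eq_one`, a half-factorial set has no other atoms. -/
def unitAtoms (G₀ : Set G) : Set (Multiset G) := {A | IsAtomSeq G₀ A ∧ crossNumber A = 1}

lemma isZeroSumSeq_of_mem_closure_unitAtoms
    (hB : B ∈ AddSubmonoid.closure (unitAtoms G₀)) : IsZeroSumSeq G₀ B := by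
  obtain ⟨l, hl, rfl⟩ := AddSubmonoid.exists_multiset_of_mem_closure hB
  exact IsZeroSumSeq.sum fun A hA => (hl A hA).1.1

lemma IsAtomSeq.crossNumber_eq_one_of_mem_closure (hA : IsAtomSeq G₀ A)
    (hmem : A ∈ AddSubmonoid.closure (unitAtoms G₀)) : crossNumber A = 1 := by
  obtain ⟨l, hl, rfl⟩ := AddSubmonoid.exists_multiset_of_mem_closure hmem
  obtain ⟨V, hV⟩ := exists_mem_of_ne_zero fun h : l = 0 => hA.2.1 (by rw [h, sum_zero])
  obtain ⟨hVatom, hVone⟩ := hl V hV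
  rw [← hA.eq_of_le hVatom.1.2 hVatom.2.1
    (single_le_sum (fun _ _ => Multiset.zero_le _) V hV), hVone]

variable [DecidableEq G]

lemma exists_mem_le_of_sum_eq_add {l : Multiset (Multiset G)} (hl : ∀ V ∈ l, crossNumber V = 1)
    (hA : crossNumber A = 1) (hsum : l.sum = Y + A) (hAY : A ⊆ Y) (hm : m ≤ crossNumber Y)
    (hcard : card A + A.toFinset.card < 2 * (m + 1)) : ∃ V ∈ l, V ≤ Y := by
  by_contra! hle
  have hlength : (card l : ℚ) = crossNumber Y + 1 := by
    rw [← crossNumber_sum_eq_card hl, hsum, crossNumber_add, hA]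
  have hlower : m + 1 ≤ card l := by
    have : (m : ℚ) + 1 ≤ card l := by linarith
    exact_mod_cast this
  have := two_mul_card_le_of_sum_eq_add hsum hAY hle
  lia

theorem mem_closure_unitAtoms_of_add_mem
    (hbad : ∀ U, IsAtomSeq G₀ U → crossNumber U ≠ 1 → A ⊆ U ∧ m ≤ crossNumber U)
    (hA : A ∈ unitAtoms G₀) (hcard : card A + A.toFinset.card < 2 * (m + 1))
    (hYA : Y + A ∈ AddSubmonoid.closure (unitAtoms G₀)) :
    Y ∈ AddSubmonoid.closure (unitAtoms G₀) := by
  induction Y using Multiset.strongInductionOn with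
  | ih Y ih =>
    obtain ⟨l, hl, hsum⟩ := AddSubmonoid.exists_multiset_of_mem_closure hYA
    by_cases hex : ∃ V ∈ l, V ≤ Y
    · obtain ⟨V, hV, hVY⟩ := hex
      obtain ⟨l, rfl⟩ := exists_cons_of_mem hV
      obtain ⟨Z, rfl⟩ := Multiset.le_iff_exists_add.1 hVY
      obtain ⟨hVl, hl⟩ := forall_mem_cons.1 hl
      refine add_mem (AddSubmonoid.subset_closure hVl)
        (ih Z (lt_add_of_pos_left Z (pos_iff_ne_zero.2 hVl.1.2.1)) ?_)
      rw [sum_cons, add_assoc, add_right_inj] at hsum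
      exact hsum ▸ AddSubmonoid.multiset_sum_mem _ l
        fun W hW => AddSubmonoid.subset_closure (hl W hW)
    · have hY : IsZeroSumSeq G₀ Y := .of_add_left hA.1.1.2
        (add_comm Y A ▸ isZeroSumSeq_of_mem_closure_unitAtoms hYA)
      obtain ⟨l', hl', rfl⟩ := hY.exists_factorization
      refine AddSubmonoid.multiset_sum_mem _ l' fun U hU =>
        AddSubmonoid.subset_closure ⟨hl' U hU, ?_⟩
      by_contra hk
      obtain ⟨hAU, hm⟩ := hbad U (hl' U hU) hk
      have hle : U ≤ l'.sum := single_le_sum (fun _ _ => Multiset.zero_le _) U hU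
      exact hex (exists_mem_le_of_sum_eq_add (fun V hV => (hl V hV).2) hA.2 hsum
        (fun g hg => mem_of_le hle (hAU hg)) (hm.trans (crossNumber_mono hle)) hcard)

theorem mem_closure_unitAtoms_of_add_mem_of_mem_closure
    (hbad : ∀ U, IsAtomSeq G₀ U → crossNumber U ≠ 1 → (∀ g ∈ G₀, g ∈ U) ∧ m ≤ crossNumber U)
    (hB : B ∈ AddSubmonoid.closure
      {A | A ∈ unitAtoms G₀ ∧ card A + A.toFinset.card < 2 * (m + 1)})
    (hYB : Y + B ∈ AddSubmonoid.closure (unitAtoms G₀)) :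
    Y ∈ AddSubmonoid.closure (unitAtoms G₀) := by
  induction hB using AddSubmonoid.closure_induction generalizing Y with
  | mem A hA =>
    refine mem_closure_unitAtoms_of_add_mem (fun U hU hk => ?_) hA.1 hA.2 hYB
    exact ⟨fun g hg => (hbad U hU hk).1 g (hA.1.1.1.1 g hg), (hbad U hU hk).2⟩
  | zero => simpa using hYB
  | add B C _ _ hB hC => exact hB (hC (by rwa [add_assoc]))

end Removal

section LCN

variable {G : Type*} [AddCommGroup G] {G₀ : Set G} {U : Multiset G}

lemma IsLCNSet.sInf_deltaSet_add_card_lt (hlcn : IsLCNSet G₀) (hU : IsAtomSeq G₀ U)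
    (hk : crossNumber U ≠ 1) {l l' : Multiset (Multiset G)} (hl : ∀ A ∈ l, IsAtomSeq G₀ A)
    (hl' : ∀ A ∈ l', A ∈ unitAtoms G₀) (hsum : U + l.sum = l'.sum) :
    sInf (DeltaSet G₀) + card l < card l' := by
  have hlt : (card l : ℚ) + 1 < card l' := calc
    (card l : ℚ) + 1 ≤ crossNumber l.sum + 1 := by
      grw [card_le_crossNumber_sum fun A hA => hlcn A (hl A hA)]
    _ < crossNumber l.sum + crossNumber U := by
      grw [lt_of_le_of_ne (hlcn U hU) hk.symm]
    _ = card l' := by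
      rw [add_comm, ← crossNumber_add, hsum,
        crossNumber_sum_eq_card fun A hA => (hl' A hA).2]
  have hle := sInf_deltaSet_add_card_le (l := U ::ₘ l) (forall_mem_cons.2 ⟨hU, hl⟩)
    (fun A hA => (hl' A hA).1) (by rw [sum_cons, hsum]) (by rw [card_cons]; exact_mod_cast hlt)
  rwa [card_cons] at hle

lemma IsAtomSeq.lt_sum_replicate_addOrderOf [Finite G] {F : Finset G}
    (hU : IsAtomSeq (F : Set G) U) (hk : crossNumber U ≠ 1) :
    U < ∑ g ∈ F, replicate (addOrderOf g) g := by
  classical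
  have hcount (g) (hg : g ∈ F) : count g U < count g (∑ g ∈ F, replicate (addOrderOf g) g) := by
    rw [count_sum', Finset.sum_eq_single_of_mem g hg fun h _ hne => by
      rw [count_replicate, if_neg hne], count_replicate_self]
    exact hU.count_lt_addOrderOf hk (isOfFinAddOrder_of_finite g)
  obtain ⟨g, hg⟩ := exists_mem_of_ne_zero hU.2.1
  refine lt_of_le_of_ne (le_iff_count.2 fun h => ?_) fun heq =>
    (hcount g (hU.1.1 g hg)).ne (congrArg (count g) heq)
  by_cases hh : h ∈ F
  · exact (hcount h hh).le
  · rw [count_eq_zero_of_notMem fun hhU => hh (hU.1.1 h hhU)]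
    exact Nat.zero_le _

-- Compare `∏_{g ∈ F} g^{ord g}`, which has `|F|` factors, with a factorization through `U`.
lemma IsLCNSet.sInf_deltaSet_add_two_le_card [Finite G] {F : Finset G}
    (hlcn : IsLCNSet (F : Set G)) (hU : IsAtomSeq (F : Set G) U) (hk : crossNumber U ≠ 1) :
    sInf (DeltaSet (F : Set G)) + 2 ≤ F.card := by
  set l' := F.val.map fun g => replicate (addOrderOf g) g
  have hl' : ∀ A ∈ l', A ∈ unitAtoms (F : Set G) := by
    intro A hA
    obtain ⟨g, hg, rfl⟩ := mem_map.1 hA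
    exact ⟨isAtomSeq_replicate_addOrderOf hg (isOfFinAddOrder_of_finite g),
      crossNumber_replicate_addOrderOf (isOfFinAddOrder_of_finite g)⟩
  obtain ⟨Z, hZ⟩ : ∃ Z, l'.sum = U + Z :=
    Multiset.le_iff_exists_add.1 (hU.lt_sum_replicate_addOrderOf hk).le
  have hZ0 : Z ≠ 0 := by
    rintro rfl
    exact (hU.lt_sum_replicate_addOrderOf hk).ne' (hZ.trans (add_zero U))
  have hZzero : IsZeroSumSeq (F : Set G) Z :=
    .of_add_left hU.1.2 (hZ ▸ .sum fun A hA => (hl' A hA).1.1)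
  obtain ⟨l, hl, rfl⟩ := hZzero.exists_factorization
  have hpos : 0 < card l := card_pos.2 fun h => hZ0 (by rw [h, sum_zero])
  have hlt := hlcn.sInf_deltaSet_add_card_lt hU hk hl hl' hZ.symm
  rw [card_map, Finset.card_val] at hlt
  lia

variable [Finite G]

lemma IsMinNonHalfFactorial.crossNumber_eq_one_of_card_toFinset_lt [DecidableEq G]
    (hmin : IsMinNonHalfFactorial G₀) (hlcn : IsLCNSet G₀) (hU : IsAtomSeq G₀ U)
    (hcard : U.toFinset.card < sInf (DeltaSet G₀) + 2) : crossNumber U = 1 := by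
  by_contra hk
  obtain rfl : (U.toFinset : Set G) = G₀ :=
    Set.ext fun g => mem_toFinset.trans (hmin.mem_iff_of_crossNumber_ne_one hU hk)
  exact hcard.not_ge (hlcn.sInf_deltaSet_add_two_le_card hU hk)

lemma IsMinNonHalfFactorial.mem_unitAtoms_of_card_toFinset_le [DecidableEq G]
    (hmin : IsMinNonHalfFactorial G₀) (hlcn : IsLCNSet G₀)
    (hr : rankG G ≤ sInf (DeltaSet G₀)) (hU : IsAtomSeq G₀ U)
    (hcard : U.toFinset.card ≤ rankG G + 1) : U ∈ unitAtoms G₀ :=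
  ⟨hU, hmin.crossNumber_eq_one_of_card_toFinset_lt hlcn hU (by lia)⟩

lemma IsMinNonHalfFactorial.sInf_deltaSet_add_one_le_crossNumber
    (hmin : IsMinNonHalfFactorial G₀) (hlcn : IsLCNSet G₀)
    (hr : rankG G ≤ sInf (DeltaSet G₀)) (hU : IsAtomSeq G₀ U) (hk : crossNumber U ≠ 1) :
    ((sInf (DeltaSet G₀) + 1 : ℕ) : ℚ) ≤ crossNumber U := by
  classical
  obtain ⟨P, hP, N, hN, hsum⟩ := hU.1.exists_add_eq
  obtain ⟨l', hl', rfl⟩ := AddSubmonoid.exists_multiset_of_mem_closure hP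
  obtain ⟨l, hl, rfl⟩ := AddSubmonoid.exists_multiset_of_mem_closure hN
  have hunit {A} (hA : IsAtomSeq G₀ A ∧ A.toFinset.card ≤ rankG G + 1) : A ∈ unitAtoms G₀ :=
    hmin.mem_unitAtoms_of_card_toFinset_le hlcn hr hA.1 hA.2
  have hlt := hlcn.sInf_deltaSet_add_card_lt hU hk (fun A hA => (hl A hA).1)
    (fun A hA => hunit (hl' A hA)) hsum
  have hcross := congrArg crossNumber hsum
  rw [crossNumber_add, crossNumber_sum_eq_card fun A hA => (hunit (hl A hA)).2,
    crossNumber_sum_eq_card fun A hA => (hunit (hl' A hA)).2] at hcross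
  have : ((sInf (DeltaSet G₀) + 1 + card l : ℕ) : ℚ) ≤ card l' := by exact_mod_cast (by lia)
  rw [Nat.cast_add] at this
  linarith

theorem IsMinNonHalfFactorial.not_isLCNSet (hmin : IsMinNonHalfFactorial G₀)
    (hr : rankG G + 1 < AddMonoid.exponent G)
    (hd : AddMonoid.exponent G ≤ sInf (DeltaSet G₀) + 2) : ¬ IsLCNSet G₀ := by
  classical
  intro hlcn
  have hunit {A} (hA : IsAtomSeq G₀ A) (hcard : A.toFinset.card ≤ rankG G + 1) :
      A ∈ unitAtoms G₀ := hmin.mem_unitAtoms_of_card_toFinset_le hlcn (by lia) hA hcard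
  have hbad (V) (hV : IsAtomSeq G₀ V) (hk : crossNumber V ≠ 1) :
      (∀ g ∈ G₀, g ∈ V) ∧ ((sInf (DeltaSet G₀) + 1 : ℕ) : ℚ) ≤ crossNumber V :=
    ⟨fun g => (hmin.mem_iff_of_crossNumber_ne_one hV hk).2,
      hmin.sInf_deltaSet_add_one_le_crossNumber hlcn (by lia) hV hk⟩
  have hshort {A} (hA : IsAtomSeq G₀ A) (hcard : A.toFinset.card ≤ rankG G + 1) :
      card A + A.toFinset.card < 2 * (sInf (DeltaSet G₀) + 1 + 1) := by
    have hle := card_le_exponent_mul_crossNumber A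
    rw [(hunit hA hcard).2, mul_one, Nat.cast_le] at hle
    lia
  obtain ⟨U, hU, hk⟩ := hmin.exists_isAtomSeq_crossNumber_ne_one
  obtain ⟨P, hP, N, hN, rfl⟩ := hU.1.exists_add_eq
  exact hk <| hU.crossNumber_eq_one_of_mem_closure <|
    mem_closure_unitAtoms_of_add_mem_of_mem_closure hbad
      (AddSubmonoid.closure_mono (Set.ofPred_subset_ofPred.2 fun A hA =>
        ⟨hunit hA.1 hA.2, hshort hA.1 hA.2⟩) hN)
      (AddSubmonoid.closure_mono (fun A hA => hunit hA.1 hA.2) hP)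

end LCN

/-- If `|G| > 2`, `r(G) < exp(G) − 1`, and `G₀` is a minimal
non-half-factorial set with `min Δ(G₀) = max Δ*(G)`, then `G₀ = {g, −g}` for some
`g ∈ G` of order `exp(G)`. -/
theorem stmt_17 {G : Type*} [AddCommGroup G] [Fintype G] (hG : 2 < Fintype.card G)
    (hr : rankG G < AddMonoid.exponent G - 1) (G₀ : Set G)
    (hmin : IsMinNonHalfFactorial G₀)
    (hmax : sInf (DeltaSet G₀) = sSup (DeltaStar G)) :
    ∃ g : G, addOrderOf g = AddMonoid.exponent G ∧ G₀ = {g, -g} := by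
  have hd : AddMonoid.exponent G ≤ sInf (DeltaSet G₀) + 2 :=
    hmax ▸ exponent_le_sSup_deltaStar_add_two
  exact hmin.exists_eq_pair_neg_of_not_isLCNSet (hmin.not_isLCNSet (by lia) hd) hd
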